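/- Let 𝒜 be a type and W = 𝒜* the free monoid of words over 𝒜. Let T_α, T_β be sets with ternary relations E_α, E_β, and let E be a ternary relation on T_β × T_α satisfying the compatibility law: E_α A B C implies E (D,A) (D,B) (D,C) for every D ∈ T_β. Then for all languages 𝓚, 𝓛 ⊆ W × T_α and 𝓜 ⊆ W × T_β: 𝓜 ⊙ (𝓚 ⊔ 𝓛) = (𝓜 ⊙ 𝓚) ⊔ (𝓜 ⊙ 𝓛), where ⊔ is the logical join (logical closure of the union) and ⊙ is the logical concatenation (logical closure, with respect to E, of the concatenation language). -/

import Mathlib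

/-- A language `𝓛 ⊆ W × T` is logically closed w.r.t. `E` (Definition 3.4). -/
def LClosedLang {W T : Type*} (E : T → T → T → Prop) (L : Set (W × T)) : Prop :=
  ∀ (w : W) (A B C : T), (w, B) ∈ L → (w, C) ∈ L → E A B C → (w, A) ∈ L

/-- Logical closure of a language. -/
def lclosureLang {W T : Type*} (E : T → T → T → Prop) (L : Set (W × T)) :
    Set (W × T) :=
  ⋂₀ {S : Set (W × T) | L ⊆ S ∧ LClosedLang E S}

/-- Language concatenation over the free monoid of words (Definition 3.2). -/
def catLang {𝒜 Tβ Tα : Type*} (M : Set (FreeMonoid 𝒜 × Tβ))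
    (K : Set (FreeMonoid 𝒜 × Tα)) : Set (FreeMonoid 𝒜 × (Tβ × Tα)) :=
  {p | ∃ u v D A, (u, D) ∈ M ∧ (v, A) ∈ K ∧ p = (u * v, (D, A))}

/-! Concatenation with `M` distributes over unions, so the only obstacle is the inner closure in
`M · cl (K ∪ L)`. For `(u, D) ∈ M` and an `E`-closed language `S`, the compatibility law makes
`{(v, A) | (u * v, (D, A)) ∈ S}` an `Eα`-closed language. Hence `S` contains `M · cl N` as soon as
it contains `M · N`, and the inner closure is absorbed by the outer one. -/

section Closure

variable {W T : Type*} {E : T → T → T → Prop} {L S : Set (W × T)}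

theorem subset_lclosureLang (E : T → T → T → Prop) (L : Set (W × T)) : L ⊆ lclosureLang E L :=
  Set.subset_sInter fun _ hS => hS.1

theorem lClosedLang_lclosureLang (E : T → T → T → Prop) (L : Set (W × T)) :
    LClosedLang E (lclosureLang E L) :=
  fun w A B C hB hC h S hS => hS.2 w A B C (hB S hS) (hC S hS) h

theorem LClosedLang.lclosureLang_subset (hS : LClosedLang E S) (hLS : L ⊆ S) :
    lclosureLang E L ⊆ S :=
  Set.sInter_subset_of_mem ⟨hLS, hS⟩

theorem LClosedLang.lclosureLang_subset_iff (hS : LClosedLang E S) :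
    lclosureLang E L ⊆ S ↔ L ⊆ S :=
  ⟨(subset_lclosureLang E L).trans, hS.lclosureLang_subset⟩

/-- Logical closure as a closure operator on languages, giving access to the lattice-theoretic
lemmas on closures of joins. Its underlying function is `lclosureLang E` by definition. -/
def lclosureOperator (W : Type*) {T : Type*} (E : T → T → T → Prop) :
    ClosureOperator (Set (W × T)) :=
  .ofPred (lclosureLang E) (LClosedLang E) (subset_lclosureLang E) (lClosedLang_lclosureLang E)
    fun _ _ hLS hS => hS.lclosureLang_subset hLS

theorem lclosureLang_union_lclosureLang (E : T → T → T → Prop) (K L : Set (W × T)) :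
    lclosureLang E (lclosureLang E K ∪ lclosureLang E L) = lclosureLang E (K ∪ L) :=
  (lclosureOperator W E).closure_sup_closure K L

theorem LClosedLang.preimage_prodMap {W' T' : Type*} {E' : T' → T' → T' → Prop} {f : W' → W}
    {g : T' → T} (hS : LClosedLang E S) (hg : ∀ A B C, E' A B C → E (g A) (g B) (g C)) :
    LClosedLang E' (Prod.map f g ⁻¹' S) :=
  fun w A B C hB hC h => hS (f w) (g A) (g B) (g C) hB hC (hg A B C h)

end Closure

section Concatenation

variable {𝒜 Tα Tβ : Type*} {M : Set (FreeMonoid 𝒜 × Tβ)} {K : Set (FreeMonoid 𝒜 × Tα)}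
  {S : Set (FreeMonoid 𝒜 × (Tβ × Tα))}

theorem catLang_eq_image2 (M : Set (FreeMonoid 𝒜 × Tβ)) (K : Set (FreeMonoid 𝒜 × Tα)) :
    catLang M K = Set.image2 (fun p q => (p.1 * q.1, (p.2, q.2))) M K := by
  ext x
  constructor
  · rintro ⟨u, v, D, A, hu, hv, rfl⟩
    exact ⟨(u, D), hu, (v, A), hv, rfl⟩
  · rintro ⟨⟨u, D⟩, hu, ⟨v, A⟩, hv, rfl⟩
    exact ⟨u, v, D, A, hu, hv, rfl⟩

theorem catLang_union (M : Set (FreeMonoid 𝒜 × Tβ)) (K L : Set (FreeMonoid 𝒜 × Tα)) :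
    catLang M (K ∪ L) = catLang M K ∪ catLang M L := by
  simp only [catLang_eq_image2, Set.image2_union_right]

theorem catLang_subset_iff :
    catLang M K ⊆ S ↔ ∀ p ∈ M, K ⊆ Prod.map (p.1 * ·) (Prod.mk p.2) ⁻¹' S := by
  rw [catLang_eq_image2, Set.image2_subset_iff]
  rfl

variable {Eα : Tα → Tα → Tα → Prop} {E : Tβ × Tα → Tβ × Tα → Tβ × Tα → Prop}

theorem LClosedLang.catLang_lclosureLang_subset_iff (hS : LClosedLang E S)
    (hE : ∀ (A B C : Tα) (D : Tβ), Eα A B C → E (D, A) (D, B) (D, C)) :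
    catLang M (lclosureLang Eα K) ⊆ S ↔ catLang M K ⊆ S := by
  simp only [catLang_subset_iff]
  exact forall₂_congr fun p _ =>
    (hS.preimage_prodMap fun A B C => hE A B C p.2).lclosureLang_subset_iff

theorem lclosureLang_catLang_lclosureLang
    (hE : ∀ (A B C : Tα) (D : Tβ), Eα A B C → E (D, A) (D, B) (D, C))
    (M : Set (FreeMonoid 𝒜 × Tβ)) (K : Set (FreeMonoid 𝒜 × Tα)) :
    lclosureLang E (catLang M (lclosureLang Eα K)) = lclosureLang E (catLang M K) :=
  -- The two concatenations have the same `E`-closed supersets.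
  congrArg Set.sInter <| Set.ext fun _ =>
    and_congr_left fun hS => hS.catLang_lclosureLang_subset_iff hE

end Concatenation

/-- second identity of Lemma 3.1: if `E` is compatible with `E_α`
in the second coordinate, then `𝓜 ⊙ (𝓚 ⊔ 𝓛) = (𝓜 ⊙ 𝓚) ⊔ (𝓜 ⊙ 𝓛)`, where `⊔`
is the logical join and `⊙` the logical concatenation. -/
theorem ocat_join_distrib {𝒜 Tα Tβ : Type*}
    (Eα : Tα → Tα → Tα → Prop) (Eβ : Tβ → Tβ → Tβ → Prop)
    (E : Tβ × Tα → Tβ × Tα → Tβ × Tα → Prop)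
    (hE : ∀ (A B C : Tα) (D : Tβ), Eα A B C → E (D, A) (D, B) (D, C))
    (K L : Set (FreeMonoid 𝒜 × Tα)) (M : Set (FreeMonoid 𝒜 × Tβ)) :
    lclosureLang E (catLang M (lclosureLang Eα (K ∪ L))) =
      lclosureLang E (lclosureLang E (catLang M K) ∪ lclosureLang E (catLang M L)) := by
  calc lclosureLang E (catLang M (lclosureLang Eα (K ∪ L)))
      = lclosureLang E (catLang M (K ∪ L)) := lclosureLang_catLang_lclosureLang hE M (K ∪ L)
    _ = lclosureLang E (catLang M K ∪ catLang M L) := by rw [catLang_union]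
    _ = lclosureLang E (lclosureLang E (catLang M K) ∪ lclosureLang E (catLang M L)) :=
      (lclosureLang_union_lclosureLang E _ _).symm
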